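/- Let U ⊆ ℂᵏ and V ⊆ ℂˢ be nonempty open sets, r ≥ 1 an integer, and for each i = 1,…,r let f_i : U → ℂ and g_i : V → ℂ be holomorphic functions. Then the map η : U × V → ℂʳ defined by η(u, v) = (f_1(u)·conj(g_1(v)), …, f_r(u)·conj(g_r(v))), where U × V is regarded as an open subset of the real inner product space ℂᵏ × ℂˢ ≅ ℝ^{2(k+s)}, is a pseudo harmonic morphism: it is harmonic and pseudo-horizontally weakly conformal. -/

import Mathlib

/-!
The map `η` is holomorphic for the orthogonal complex structure `J (u, v) = (iu, -iv)` on
`ℂᵏ × ℂˢ`, since conjugation turns a function holomorphic for `i` into one holomorphic for `-i`.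

Holomorphy with respect to any orthogonal complex structure `J` implies the claim. For each
component `u + iv` the Cauchy–Riemann equations say `∇v = J ∇u`, so the two PHWC identities are the
orthogonality and the skewness of `J`. Differentiating, `Hess v = J ∘ Hess u` is a skew operator
composed with a symmetric one, so its trace vanishes; `∇u = -J ∇v` is treated in the same way.

That functions assumed only complex-differentiable are `C²` comes from the Schwarz lemma: it makes
the derivative locally Lipschitz, so that difference quotients converge locally uniformly to the
directional derivatives, and it shows that uniform limits of holomorphic functions are holomorphic.
-/

open scoped RealInnerProductSpace

/-- The Laplacian of a real-valued function on an inner product space: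
the trace of the derivative of the gradient (i.e. of the second derivative). -/
noncomputable def lap {E : Type*} [NormedAddCommGroup E] [InnerProductSpace ℝ E]
    [CompleteSpace E] (f : E → ℝ) (x : E) : ℝ :=
  LinearMap.trace ℝ E (fderiv ℝ (gradient f) x : E →ₗ[ℝ] E)

/-- A real-valued function is harmonic on an open set `W` if it is `C²` there and its
Laplacian vanishes identically on `W`. -/
def HarmonicOn {E : Type*} [NormedAddCommGroup E] [InnerProductSpace ℝ E]
    [CompleteSpace E] (f : E → ℝ) (W : Set E) : Prop :=
  ContDiffOn ℝ 2 f W ∧ ∀ x ∈ W, lap f x = 0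

/-- Pseudo-horizontally weakly conformal map into `ℂⁿ`, on a set `U`. -/
def PHWCOn {E : Type*} [NormedAddCommGroup E] [InnerProductSpace ℝ E] [CompleteSpace E]
    {n : ℕ} (φ : E → (Fin n → ℂ)) (U : Set E) : Prop :=
  ∀ A B : Fin n, ∀ x ∈ U,
    ⟪gradient (fun y => (φ y A).re) x, gradient (fun y => (φ y B).re) x⟫ -
      ⟪gradient (fun y => (φ y A).im) x, gradient (fun y => (φ y B).im) x⟫ = 0 ∧
    ⟪gradient (fun y => (φ y A).im) x, gradient (fun y => (φ y B).re) x⟫ +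
      ⟪gradient (fun y => (φ y A).re) x, gradient (fun y => (φ y B).im) x⟫ = 0

/-- Pseudo harmonic morphism into `ℂⁿ` on a set `U`: a `C²` map which is harmonic
(the real and imaginary parts of each component are harmonic) and
pseudo-horizontally weakly conformal. -/
def PHMOn {E : Type*} [NormedAddCommGroup E] [InnerProductSpace ℝ E] [CompleteSpace E]
    {n : ℕ} (φ : E → (Fin n → ℂ)) (U : Set E) : Prop :=
  ContDiffOn ℝ 2 φ U ∧
  (∀ k : Fin n, HarmonicOn (fun y => (φ y k).re) U ∧ HarmonicOn (fun y => (φ y k).im) U) ∧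
  PHWCOn φ U

open scoped Topology

section DifferenceQuotient

open Filter Metric

lemma tendsto_norm_smul_nhdsNE_zero {𝕜 E : Type*} [NormedField 𝕜] [SeminormedAddCommGroup E]
    [NormedSpace 𝕜 E] (e : E) : Tendsto (fun a : 𝕜 => ‖a • e‖) (𝓝[≠] 0) (𝓝 0) :=
  ((continuous_id.smul continuous_const).norm.tendsto' 0 0 (by simp)).mono_left
    nhdsWithin_le_nhds

variable {𝕜 E F : Type*} [RCLike 𝕜] [NormedAddCommGroup E] [NormedSpace ℝ E] [NormedSpace 𝕜 E]
  [NormedAddCommGroup F] [NormedSpace 𝕜 F] {f : E → F} {K : NNReal}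

lemma norm_image_add_sub_sub_fderiv_le {s : Set E} (hs : Convex ℝ s)
    (hf : ∀ x ∈ s, DifferentiableAt 𝕜 f x) (hK : LipschitzOnWith K (fderiv 𝕜 f) s) {x h : E}
    (hx : x ∈ s) (hh : x + h ∈ s) :
    ‖f (x + h) - f x - fderiv 𝕜 f x h‖ ≤ K * ‖h‖ ^ 2 := by
  have hseg : segment ℝ x (x + h) ⊆ s := hs.segment_subset hx hh
  have hbound : ∀ z ∈ segment ℝ x (x + h), ‖fderiv 𝕜 f z - fderiv 𝕜 f x‖ ≤ K * ‖h‖ := by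
    intro z hz
    refine (hK.norm_sub_le (hseg hz) hx).trans ?_
    gcongr
    simpa using norm_sub_le_of_mem_segment hz
  have hmean := (convex_segment x (x + h)).norm_image_sub_le_of_norm_fderiv_le'
    (fun z hz => hf z (hseg hz)) hbound (left_mem_segment ..) (right_mem_segment ..)
  rwa [add_sub_cancel_left, mul_assoc, ← sq] at hmean

lemma tendstoUniformlyOn_differenceQuotient {s t : Set E} (ht : Convex ℝ t)
    (hf : ∀ x ∈ t, DifferentiableAt 𝕜 f x) (hK : LipschitzOnWith K (fderiv 𝕜 f) t) {δ : ℝ}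
    (hδ : 0 < δ) (hst : thickening δ s ⊆ t) (e : E) :
    TendstoUniformlyOn (fun (a : 𝕜) x => a⁻¹ • (f (x + a • e) - f x)) (fun x => fderiv 𝕜 f x e)
      (𝓝[≠] 0) s := by
  have hsmul := tendsto_norm_smul_nhdsNE_zero (𝕜 := 𝕜) e
  have herror : Tendsto (fun a : 𝕜 => K * ‖a • e‖ * ‖e‖) (𝓝[≠] 0) (𝓝 0) := by
    simpa using (hsmul.const_mul (K : ℝ)).mul_const ‖e‖
  refine tendstoUniformlyOn_iff.2 fun ε hε => ?_
  filter_upwards [self_mem_nhdsWithin, hsmul.eventually_lt_const hδ,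
    herror.eventually_lt_const hε] with a (ha : a ≠ 0) haδ haε x hx
  have hx_add : x + a • e ∈ t := hst (mem_thickening_iff.2 ⟨x, hx, by simpa using haδ⟩)
  have hxt : x ∈ t := hst (self_subset_thickening hδ s hx)
  calc dist (fderiv 𝕜 f x e) (a⁻¹ • (f (x + a • e) - f x))
      = ‖a‖⁻¹ * ‖f (x + a • e) - f x - fderiv 𝕜 f x (a • e)‖ := by
        rw [dist_comm, dist_eq_norm, ← norm_inv, ← norm_smul, smul_sub _ _ (fderiv 𝕜 f x _),
          map_smul, inv_smul_smul₀ ha]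
    _ ≤ ‖a‖⁻¹ * (K * ‖a • e‖ ^ 2) := by
        gcongr
        exact norm_image_add_sub_sub_fderiv_le ht hf hK hxt hx_add
    _ = K * ‖a • e‖ * ‖e‖ := by
        rw [norm_smul]
        field_simp [norm_ne_zero_iff.2 ha]
    _ < ε := haε

end DifferenceQuotient

section Regularity

open Filter Metric

variable {E F : Type*} [NormedAddCommGroup E] [NormedSpace ℂ E] [NormedAddCommGroup F]
  [NormedSpace ℂ F]

lemma norm_fderiv_le_of_forall_mem_ball_norm_le {f : E → F} {c : E} {R C : ℝ} (hR : 0 < R)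
    (hf : DifferentiableOn ℂ f (ball c R)) (hC : ∀ z ∈ ball c R, ‖f z‖ ≤ C) :
    ‖fderiv ℂ f c‖ ≤ 2 * C / R := by
  refine Complex.norm_fderiv_le_div_of_mapsTo_ball hf (fun z hz => ?_) hR
  rw [mem_closedBall, dist_eq_norm]
  linarith [norm_sub_le (f z) (f c), hC z hz, hC c (mem_ball_self hR)]

lemma norm_fderiv_sub_le_of_forall_mem_ball_norm_le {f : E → F} {c : E} {r C : ℝ}
    (hf : DifferentiableOn ℂ f (ball c (3 * r))) (hC : ∀ z ∈ ball c (3 * r), ‖f z‖ ≤ C)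
    {x y : E} (hx : x ∈ ball c r) (hy : y ∈ ball c r) :
    ‖fderiv ℂ f y - fderiv ℂ f x‖ ≤ 4 * C / r ^ 2 * ‖y - x‖ := by
  have hr : 0 < r := pos_of_mem_ball hx
  have hdiff : ∀ z ∈ ball c (2 * r), DifferentiableAt ℂ f z := fun z hz =>
    hf.differentiableAt (isOpen_ball.mem_nhds (ball_subset_ball (by linarith) hz))
  have hbound : ∀ z ∈ ball c (2 * r), ‖fderiv ℂ f z‖ ≤ 2 * C / r := fun z hz =>
    have hsub : ball z r ⊆ ball c (3 * r) := ball_subset_ball' (by linarith [mem_ball.1 hz])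
    norm_fderiv_le_of_forall_mem_ball_norm_le hr (hf.mono hsub) fun w hw => hC w (hsub hw)
  -- The derivative of `w ↦ f (w + (y - x)) - f w` at `x` is the difference to be bounded, and
  -- that function is `O(‖y - x‖)` by the bound on the first derivative.
  have hleft : ball x r ⊆ ball c (2 * r) := ball_subset_ball' (by linarith [mem_ball.1 hx])
  have hright : ∀ w ∈ ball x r, w + (y - x) ∈ ball c (2 * r) := fun w hw => by
    have hw' : w + (y - x) ∈ ball y r := by
      simpa [dist_eq_norm, add_sub_right_comm, add_sub_assoc] using hw
    exact ball_subset_ball' (by linarith [mem_ball.1 hy]) hw'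
  have htranslate : ∀ w ∈ ball x r, HasFDerivAt (fun w => f (w + (y - x)) - f w)
      (fderiv ℂ f (w + (y - x)) - fderiv ℂ f w) w := fun w hw =>
    ((hasFDerivAt_comp_add_right _).2 (hdiff _ (hright w hw)).hasFDerivAt).sub
      (hdiff w (hleft hw)).hasFDerivAt
  have hlip : ∀ w ∈ ball x r, ‖f (w + (y - x)) - f w‖ ≤ 2 * C / r * ‖y - x‖ := fun w hw => by
    simpa using (convex_ball c (2 * r)).norm_image_sub_le_of_norm_fderiv_le hdiff hbound
      (hleft hw) (hright w hw)
  calc ‖fderiv ℂ f y - fderiv ℂ f x‖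
      = ‖fderiv ℂ (fun w => f (w + (y - x)) - f w) x‖ := by
        rw [(htranslate x (mem_ball_self hr)).fderiv, add_sub_cancel]
    _ ≤ 2 * (2 * C / r * ‖y - x‖) / r :=
        norm_fderiv_le_of_forall_mem_ball_norm_le hr
          (fun w hw => (htranslate w hw).differentiableAt.differentiableWithinAt) hlip
    _ = 4 * C / r ^ 2 * ‖y - x‖ := by ring

lemma exists_lipschitzOnWith_fderiv {f : E → F} {U : Set E} (hU : IsOpen U)
    (hf : DifferentiableOn ℂ f U) {c : E} (hc : c ∈ U) :
    ∃ K, ∃ s ∈ 𝓝 c, LipschitzOnWith K (fderiv ℂ f) s := by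
  have hcont : ContinuousAt f c := (hf.differentiableAt (hU.mem_nhds hc)).continuousAt
  have hbdd : ∀ᶠ z in 𝓝 c, ‖f z‖ ≤ ‖f c‖ + 1 :=
    hcont.norm.eventually_le_const (lt_add_one _)
  obtain ⟨ε, hε, hball⟩ := Metric.mem_nhds_iff.1 (inter_mem (hU.mem_nhds hc) hbdd)
  rw [← mul_div_cancel₀ ε (three_ne_zero' ℝ)] at hball
  refine ⟨(4 * (‖f c‖ + 1) / (ε / 3) ^ 2).toNNReal, ball c (ε / 3),
    ball_mem_nhds c (by positivity), LipschitzOnWith.of_dist_le' fun x hx y hy => ?_⟩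
  simpa only [dist_eq_norm] using norm_fderiv_sub_le_of_forall_mem_ball_norm_le
    (hf.mono fun z hz => (hball hz).1) (fun z hz => (hball hz).2) hy hx

lemma uniformCauchySeqOn_fderiv_of_thickening {ι : Type*} {l : Filter ι} {q : ι → E → F}
    {s : Set E} {δ : ℝ} (hδ : 0 < δ) (hq : UniformCauchySeqOn q l (thickening δ s))
    (hd : ∀ᶠ n in l, DifferentiableOn ℂ (q n) (thickening δ s)) :
    UniformCauchySeqOn (fun n => fderiv ℂ (q n)) l s := by
  intro u hu
  obtain ⟨ε, hε, hεu⟩ := mem_uniformity_dist.1 hu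
  filter_upwards [hq _ (dist_mem_uniformity (show 0 < ε * δ / 4 by positivity)),
    hd.prod_mk hd] with n hn hdn y hy
  have hball : ball y δ ⊆ thickening δ s := ball_subset_thickening hy δ
  have hdiff : ∀ i, DifferentiableOn ℂ (q i) (thickening δ s) → DifferentiableAt ℂ (q i) y :=
    fun i hi => hi.differentiableAt (mem_of_superset (ball_mem_nhds y hδ) hball)
  apply hεu
  calc dist (fderiv ℂ (q n.1) y) (fderiv ℂ (q n.2) y)
      = ‖fderiv ℂ (q n.1 - q n.2) y‖ := by
        rw [dist_eq_norm, fderiv_sub (hdiff _ hdn.1) (hdiff _ hdn.2)]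
    _ ≤ 2 * (ε * δ / 4) / δ :=
        norm_fderiv_le_of_forall_mem_ball_norm_le hδ ((hdn.1.sub hdn.2).mono hball)
          fun z hz => by simpa [dist_eq_norm] using (hn z (hball hz)).le
    _ < ε := by field_simp; linarith

lemma differentiableOn_of_tendstoUniformlyOn [CompleteSpace F] {ι : Type*} {l : Filter ι} [l.NeBot]
    {q : ι → E → F} {g : E → F} {U : Set E} (hU : IsOpen U) (hq : TendstoUniformlyOn q g l U)
    (hd : ∀ᶠ n in l, DifferentiableOn ℂ (q n) U) : DifferentiableOn ℂ g U := by
  intro x hx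
  obtain ⟨δ, hδ, hδU⟩ : ∃ δ > 0, thickening δ (ball x δ) ⊆ U := by
    obtain ⟨ε, hε, hεU⟩ := isOpen_iff.1 hU x hx
    exact ⟨ε / 2, half_pos hε, (Metric.thickening_ball ..).trans <| by rwa [add_halves]⟩
  have hcauchy : UniformCauchySeqOn (fun n => fderiv ℂ (q n)) l (ball x δ) :=
    uniformCauchySeqOn_fderiv_of_thickening hδ (hq.uniformCauchySeqOn.mono hδU)
      (hd.mono fun _ h => h.mono hδU)
  have hlim : ∀ y ∈ ball x δ, ∃ g', Tendsto (fun n => fderiv ℂ (q n) y) l (𝓝 g') :=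
    fun y hy => CompleteSpace.complete (hcauchy.cauchy_map hy)
  choose! g' hg' using hlim
  have hball : ball x δ ∈ 𝓝 x := ball_mem_nhds x hδ
  have hderiv : ∀ᶠ p : ι × E in l ×ˢ 𝓝 x, HasFDerivAt (q p.1) (fderiv ℂ (q p.1) p.2) p.2 := by
    filter_upwards [hd.prod_mk (hU.mem_nhds hx)] with p hp
    exact (hp.1.differentiableAt (hU.mem_nhds hp.2)).hasFDerivAt
  exact (hasFDerivAt_of_tendstoUniformlyOnFilter
    ((hcauchy.tendstoUniformlyOn_of_tendsto hg').tendstoUniformlyOnFilter.mono_right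
      (le_principal_iff.2 hball)) hderiv
    (mem_of_superset (hU.mem_nhds hx) fun y hy => hq.tendsto_at hy)).differentiableAt
      |>.differentiableWithinAt

lemma differentiableOn_fderiv_apply [CompleteSpace F] {f : E → F} {U : Set E} (hU : IsOpen U)
    (hf : DifferentiableOn ℂ f U) (e : E) : DifferentiableOn ℂ (fun x => fderiv ℂ f x e) U := by
  intro c hc
  obtain ⟨K, s, hs, hK⟩ := exists_lipschitzOnWith_fderiv hU hf hc
  obtain ⟨ε, hε, hball⟩ := Metric.mem_nhds_iff.1 (inter_mem (hU.mem_nhds hc) hs)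
  have hdiff : ∀ x ∈ ball c ε, DifferentiableAt ℂ f x := fun x hx =>
    hf.differentiableAt (hU.mem_nhds (hball hx).1)
  have hthick : thickening (ε / 2) (ball c (ε / 2)) ⊆ ball c ε :=
    (Metric.thickening_ball ..).trans <| by rw [add_halves]
  have hquot : ∀ᶠ a : ℂ in 𝓝[≠] 0,
      DifferentiableOn ℂ (fun x => a⁻¹ • (f (x + a • e) - f x)) (ball c (ε / 2)) := by
    have hsmall : ∀ᶠ a : ℂ in 𝓝[≠] 0, ‖a • e‖ < ε / 2 :=
      (tendsto_norm_smul_nhdsNE_zero e).eventually_lt_const (half_pos hε)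
    filter_upwards [hsmall] with a ha x hx
    have hx_add : x + a • e ∈ ball c ε :=
      hthick (mem_thickening_iff.2 ⟨x, hx, by simpa using ha⟩)
    have hx_mem : x ∈ ball c ε := hthick (self_subset_thickening (half_pos hε) _ hx)
    have htranslate : DifferentiableAt ℂ (fun x => f (x + a • e)) x :=
      (differentiableAt_comp_add_right _).2 (hdiff _ hx_add)
    exact ((htranslate.sub (hdiff x hx_mem)).const_smul a⁻¹).differentiableWithinAt
  exact (differentiableOn_of_tendstoUniformlyOn isOpen_ball
    (tendstoUniformlyOn_differenceQuotient (convex_ball c ε) hdiff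
      (hK.mono fun x hx => (hball hx).2) (half_pos hε) hthick e) hquot).differentiableAt
        (ball_mem_nhds c (half_pos hε)) |>.differentiableWithinAt

lemma contDiffOn_of_differentiableOn_complex [FiniteDimensional ℂ E] [CompleteSpace F]
    {f : E → F} {U : Set E} (hU : IsOpen U) (hf : DifferentiableOn ℂ f U) {n : ℕ∞} :
    ContDiffOn ℂ n f U := by
  suffices ∀ m : ℕ, ContDiffOn ℂ m f U from contDiffOn_iff_forall_nat_le.2 fun m _ => this m
  intro m
  induction m generalizing f with
  | zero => simpa using hf.continuousOn
  | succ m ih =>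
    push_cast
    rw [contDiffOn_succ_iff_fderiv_of_isOpen hU]
    exact ⟨hf, by simp, contDiffOn_clm_apply.2 fun e => ih (differentiableOn_fderiv_apply hU hf e)⟩

lemma contDiffOn_mul_conj [NormedSpace ℝ E] [IsScalarTower ℝ ℂ E] [NormedSpace ℝ F]
    [IsScalarTower ℝ ℂ F] {n : WithTop ℕ∞} {f : E → ℂ} {g : F → ℂ} {U : Set E} {V : Set F}
    (hf : ContDiffOn ℂ n f U) (hg : ContDiffOn ℂ n g V) :
    ContDiffOn ℝ n (fun z : WithLp 2 (E × F) => f z.fst * starRingEnd ℂ (g z.snd))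
      (WithLp.equiv 2 (E × F) ⁻¹' U ×ˢ V) := by
  have hfst : ContDiffOn ℝ n (fun z : WithLp 2 (E × F) => f z.fst) (WithLp.equiv 2 _ ⁻¹' U ×ˢ V) :=
    (hf.restrict_scalars ℝ).comp (WithLp.fstL 2 ℝ E F).contDiff.contDiffOn fun _ hz => hz.1
  have hsnd : ContDiffOn ℝ n (fun z : WithLp 2 (E × F) => g z.snd) (WithLp.equiv 2 _ ⁻¹' U ×ˢ V) :=
    (hg.restrict_scalars ℝ).comp (WithLp.sndL 2 ℝ E F).contDiff.contDiffOn fun _ hz => hz.2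
  exact hfst.mul (Complex.conjCLE.contDiff.comp_contDiffOn hsnd)

end Regularity

section Laplacian

variable {E : Type*} [NormedAddCommGroup E] [InnerProductSpace ℝ E]

lemma trace_comp_eq_zero_of_skew_of_isSymmetric [FiniteDimensional ℝ E] {S T : E →ₗ[ℝ] E}
    (hS : ∀ x y, ⟪S x, y⟫ = -⟪x, S y⟫) (hT : T.IsSymmetric) :
    LinearMap.trace ℝ E (S ∘ₗ T) = 0 := by
  have hanti : LinearMap.trace ℝ E (S ∘ₗ T) = -LinearMap.trace ℝ E (T ∘ₗ S) := by
    simp only [LinearMap.trace_eq_sum_inner _ (stdOrthonormalBasis ℝ E),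
      ← Finset.sum_neg_distrib, LinearMap.comp_apply]
    refine Finset.sum_congr rfl fun i _ => ?_
    rw [← hT, real_inner_comm, hS]
  linarith [LinearMap.trace_comp_comm' S T]

variable [CompleteSpace E] {f h : E → ℝ} {x : E}

lemma differentiableAt_gradient (hf : ContDiffAt ℝ 2 f x) : DifferentiableAt ℝ (gradient f) x :=
  (InnerProductSpace.toDual ℝ E).symm.toContinuousLinearEquiv.differentiableAt.comp x <|
    (hf.fderiv_right (m := 1) le_rfl).differentiableAt one_ne_zero

lemma inner_fderiv_gradient_left (f : E → ℝ) (x v w : E) :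
    ⟪fderiv ℝ (gradient f) x v, w⟫ = fderiv ℝ (fderiv ℝ f) x v w := by
  have hcomp : gradient f =
      (InnerProductSpace.toDual ℝ E).symm.toContinuousLinearEquiv ∘ fderiv ℝ f := rfl
  rw [hcomp, ContinuousLinearEquiv.comp_fderiv]
  simp

lemma isSymmetric_fderiv_gradient (hf : ContDiffAt ℝ 2 f x) :
    (fderiv ℝ (gradient f) x : E →ₗ[ℝ] E).IsSymmetric := fun v w => by
  have hsymm : IsSymmSndFDerivAt ℝ f x := hf.isSymmSndFDerivAt (by simp)
  rw [real_inner_comm _ v]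
  simpa [inner_fderiv_gradient_left] using hsymm v w

lemma lap_eq_zero_of_gradient_eventuallyEq [FiniteDimensional ℝ E] {S : E →L[ℝ] E}
    (hS : ∀ x y, ⟪S x, y⟫ = -⟪x, S y⟫) (hf : ContDiffAt ℝ 2 f x)
    (hgrad : gradient h =ᶠ[𝓝 x] S ∘ gradient f) : lap h x = 0 := by
  have hHess : fderiv ℝ (gradient h) x = S ∘L fderiv ℝ (gradient f) x := by
    rw [hgrad.fderiv_eq, fderiv_comp x S.differentiableAt (differentiableAt_gradient hf), S.fderiv]
  rw [lap, hHess]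
  exact trace_comp_eq_zero_of_skew_of_isSymmetric hS (isSymmetric_fderiv_gradient hf)

end Laplacian

/-- An orthogonal complex structure on a real inner product space: an isometric `J` with
`J ^ 2 = -1`. -/
structure IsOrthogonalComplexStructure {E : Type*} [NormedAddCommGroup E] [InnerProductSpace ℝ E]
    (J : E →L[ℝ] E) : Prop where
  norm_map : ∀ x, ‖J x‖ = ‖x‖
  map_map : ∀ x, J (J x) = -x

/-- The operator `(u, v) ↦ (S u, T v)` between `ℓ²` products, used to combine complex structures on
the two factors. -/
noncomputable def prodMapL2 {E E' F F' : Type*} [NormedAddCommGroup E] [NormedSpace ℝ E]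
    [NormedAddCommGroup E'] [NormedSpace ℝ E'] [NormedAddCommGroup F] [NormedSpace ℝ F]
    [NormedAddCommGroup F'] [NormedSpace ℝ F'] (S : E →L[ℝ] E') (T : F →L[ℝ] F') :
    WithLp 2 (E × F) →L[ℝ] WithLp 2 (E' × F') :=
  (WithLp.prodContinuousLinearEquiv 2 ℝ E' F').symm ∘L S.prodMap T ∘L
    WithLp.prodContinuousLinearEquiv 2 ℝ E F

namespace IsOrthogonalComplexStructure

variable {E F : Type*} [NormedAddCommGroup E] [InnerProductSpace ℝ E] [NormedAddCommGroup F]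
  [InnerProductSpace ℝ F] {J : E →L[ℝ] E}

lemma inner_map_map (hJ : IsOrthogonalComplexStructure J) (x y : E) : ⟪J x, J y⟫ = ⟪x, y⟫ :=
  LinearIsometry.inner_map_map ⟨J.toLinearMap, hJ.norm_map⟩ x y

lemma inner_map_left (hJ : IsOrthogonalComplexStructure J) (x y : E) : ⟪J x, y⟫ = -⟪x, J y⟫ := by
  rw [← hJ.inner_map_map x (J y), hJ.map_map, inner_neg_right, neg_neg]

lemma neg (hJ : IsOrthogonalComplexStructure J) : IsOrthogonalComplexStructure (-J) where
  norm_map x := by simp [hJ.norm_map]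
  map_map x := by simp [hJ.map_map]

lemma I_smul_id [NormedSpace ℂ E] [IsScalarTower ℝ ℂ E] :
    IsOrthogonalComplexStructure (Complex.I • ContinuousLinearMap.id ℝ E) where
  norm_map x := by simp [norm_smul]
  map_map x := by simp [smul_smul]

lemma prodMapL2 {K : F →L[ℝ] F} (hJ : IsOrthogonalComplexStructure J)
    (hK : IsOrthogonalComplexStructure K) : IsOrthogonalComplexStructure (prodMapL2 J K) where
  norm_map z := by
    rw [← sq_eq_sq₀ (norm_nonneg _) (norm_nonneg _), WithLp.prod_norm_sq_eq_of_L2,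
      WithLp.prod_norm_sq_eq_of_L2]
    exact congr_arg₂ (fun a b => a ^ 2 + b ^ 2) (hJ.norm_map z.fst) (hK.norm_map z.snd)
  map_map z := WithLp.ofLp_injective 2 (Prod.ext (hJ.map_map z.fst) (hK.map_map z.snd))

end IsOrthogonalComplexStructure

/-- Holomorphy of `φ : E → ℂ` at `x` with respect to a complex structure `J` on `E`: the real
differential of `φ` at `x` exists and intertwines `J` with multiplication by `i`. -/
def JHolomorphicAt {E : Type*} [NormedAddCommGroup E] [NormedSpace ℝ E] (J : E →L[ℝ] E)
    (φ : E → ℂ) (x : E) : Prop :=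
  ∃ φ' : E →L[ℝ] ℂ, HasFDerivAt φ φ' x ∧ ∀ w, φ' (J w) = Complex.I * φ' w

namespace JHolomorphicAt

section NormedSpace

variable {E F : Type*} [NormedAddCommGroup E] [NormedSpace ℝ E] [NormedAddCommGroup F]
  [NormedSpace ℝ F] {J : E →L[ℝ] E} {φ ψ : E → ℂ} {x : E}

lemma of_differentiableAt [NormedSpace ℂ E] [IsScalarTower ℝ ℂ E]
    (hφ : DifferentiableAt ℂ φ x) :
    JHolomorphicAt (Complex.I • ContinuousLinearMap.id ℝ E) φ x :=
  ⟨_, hφ.hasFDerivAt.restrictScalars ℝ, fun w => by simp⟩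

lemma conj (hφ : JHolomorphicAt J φ x) : JHolomorphicAt (-J) (fun y => starRingEnd ℂ (φ y)) x :=
  let ⟨_, hφ', hJ⟩ := hφ
  ⟨_, Complex.conjCLE.hasFDerivAt.comp x hφ', fun w => by simp [hJ]⟩

lemma mul (hφ : JHolomorphicAt J φ x) (hψ : JHolomorphicAt J ψ x) :
    JHolomorphicAt J (fun y => φ y * ψ y) x :=
  let ⟨_, hφ', hφJ⟩ := hφ
  let ⟨_, hψ', hψJ⟩ := hψ
  ⟨_, hφ'.mul hψ', fun w => by simp [hφJ, hψJ]; ring⟩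

lemma comp_clm {K : F →L[ℝ] F} {L : F →L[ℝ] E} {y : F} (hφ : JHolomorphicAt J φ (L y))
    (hL : ∀ w, L (K w) = J (L w)) : JHolomorphicAt K (fun z => φ (L z)) y :=
  let ⟨_, hφ', hJ⟩ := hφ
  ⟨_, hφ'.comp y L.hasFDerivAt, fun w => by simp [hL, hJ]⟩

lemma mul_conj [NormedSpace ℂ E] [IsScalarTower ℝ ℂ E] [NormedSpace ℂ F] [IsScalarTower ℝ ℂ F]
    {f : E → ℂ} {g : F → ℂ} {z : WithLp 2 (E × F)} (hf : DifferentiableAt ℂ f z.fst)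
    (hg : DifferentiableAt ℂ g z.snd) :
    JHolomorphicAt (prodMapL2 (Complex.I • ContinuousLinearMap.id ℝ E)
        (-(Complex.I • ContinuousLinearMap.id ℝ F)))
      (fun z : WithLp 2 (E × F) => f z.fst * starRingEnd ℂ (g z.snd)) z :=
  ((of_differentiableAt hf).comp_clm (L := WithLp.fstL 2 ℝ E F) fun _ => rfl).mul
    ((of_differentiableAt hg).conj.comp_clm (L := WithLp.sndL 2 ℝ E F) fun _ => rfl)

end NormedSpace

lemma gradient_im {E : Type*} [NormedAddCommGroup E] [InnerProductSpace ℝ E] [CompleteSpace E]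
    {J : E →L[ℝ] E} (hJ : ∀ x y, ⟪J x, y⟫ = -⟪x, J y⟫) {φ : E → ℂ} {x : E}
    (hφ : JHolomorphicAt J φ x) :
    gradient (fun y => (φ y).im) x = J (gradient (fun y => (φ y).re) x) := by
  obtain ⟨φ', hφ', hφJ⟩ := hφ
  have hre : HasFDerivAt (fun y => (φ y).re) (Complex.reCLM ∘L φ') x :=
    Complex.reCLM.hasFDerivAt.comp x hφ'
  have him : HasFDerivAt (fun y => (φ y).im) (Complex.imCLM ∘L φ') x :=
    Complex.imCLM.hasFDerivAt.comp x hφ'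
  refine ext_inner_right ℝ fun w => ?_
  rw [hJ, inner_gradient_left, inner_gradient_left, hre.fderiv, him.fderiv]
  simp [hφJ]

end JHolomorphicAt

section PseudoHarmonicMorphism

variable {E : Type*} [NormedAddCommGroup E] [InnerProductSpace ℝ E] [CompleteSpace E]
  [FiniteDimensional ℝ E]

lemma harmonicOn_of_gradient_eq {S : E →L[ℝ] E}
    (hS : ∀ x y, ⟪S x, y⟫ = -⟪x, S y⟫) {f h : E → ℝ} {W : Set E} (hW : IsOpen W)
    (hf : ContDiffOn ℝ 2 f W) (hh : ContDiffOn ℝ 2 h W)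
    (hgrad : ∀ x ∈ W, gradient h x = S (gradient f x)) : HarmonicOn h W :=
  ⟨hh, fun _ hx => lap_eq_zero_of_gradient_eventuallyEq hS (hf.contDiffAt (hW.mem_nhds hx))
    (Filter.mem_of_superset (hW.mem_nhds hx) hgrad)⟩

theorem phmOn_of_jHolomorphicAt {J : E →L[ℝ] E} (hJ : IsOrthogonalComplexStructure J)
    {n : ℕ} {φ : E → Fin n → ℂ} {W : Set E} (hW : IsOpen W) (hφ : ContDiffOn ℝ 2 φ W)
    (hφJ : ∀ i, ∀ x ∈ W, JHolomorphicAt J (fun y => φ y i) x) : PHMOn φ W := by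
  have hgrad_im : ∀ i, ∀ x ∈ W,
      gradient (fun y => (φ y i).im) x = J (gradient (fun y => (φ y i).re) x) :=
    fun i x hx => (hφJ i x hx).gradient_im hJ.inner_map_left
  have hgrad_re : ∀ i, ∀ x ∈ W,
      gradient (fun y => (φ y i).re) x = (-J) (gradient (fun y => (φ y i).im) x) :=
    fun i x hx => by simp [hgrad_im i x hx, hJ.map_map]
  have hre : ∀ i, ContDiffOn ℝ 2 (fun y => (φ y i).re) W := fun i =>
    Complex.reCLM.contDiff.comp_contDiffOn (contDiffOn_pi.1 hφ i)
  have him : ∀ i, ContDiffOn ℝ 2 (fun y => (φ y i).im) W := fun i =>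
    Complex.imCLM.contDiff.comp_contDiffOn (contDiffOn_pi.1 hφ i)
  refine ⟨hφ, fun i =>
    ⟨harmonicOn_of_gradient_eq hJ.neg.inner_map_left hW (him i) (hre i) (hgrad_re i),
      harmonicOn_of_gradient_eq hJ.inner_map_left hW (hre i) (him i) (hgrad_im i)⟩,
    fun A B x hx => ?_⟩
  rw [hgrad_im A x hx, hgrad_im B x hx, hJ.inner_map_map, hJ.inner_map_left]
  exact ⟨sub_self _, neg_add_cancel _⟩

end PseudoHarmonicMorphism

theorem holom_times_conj_holom_is_phm_general {E F : Type*} [NormedAddCommGroup E]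
    [InnerProductSpace ℝ E] [CompleteSpace E] [FiniteDimensional ℝ E] [NormedSpace ℂ E]
    [IsScalarTower ℝ ℂ E] [NormedAddCommGroup F] [InnerProductSpace ℝ F] [CompleteSpace F]
    [FiniteDimensional ℝ F] [NormedSpace ℂ F] [IsScalarTower ℝ ℂ F] {r : ℕ} {U : Set E} {V : Set F}
    (hU : IsOpen U) (hV : IsOpen V) {f : Fin r → E → ℂ} {g : Fin r → F → ℂ}
    (hf : ∀ i, DifferentiableOn ℂ (f i) U) (hg : ∀ i, DifferentiableOn ℂ (g i) V) :
    PHMOn (fun (z : WithLp 2 (E × F)) i => f i z.fst * starRingEnd ℂ (g i z.snd))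
      (WithLp.equiv 2 (E × F) ⁻¹' U ×ˢ V) := by
  have : FiniteDimensional ℂ E := FiniteDimensional.right ℝ ℂ E
  have : FiniteDimensional ℂ F := FiniteDimensional.right ℝ ℂ F
  have hW : IsOpen (WithLp.equiv 2 (E × F) ⁻¹' U ×ˢ V) :=
    (hU.prod hV).preimage (WithLp.prod_continuous_ofLp 2 E F)
  refine phmOn_of_jHolomorphicAt (.prodMapL2 .I_smul_id (.neg .I_smul_id)) hW
    (contDiffOn_pi.2 fun i => ?_) fun i z hz => ?_
  · exact contDiffOn_mul_conj (n := (2 : ℕ∞)) (contDiffOn_of_differentiableOn_complex hU (hf i))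
      (contDiffOn_of_differentiableOn_complex hV (hg i))
  · exact .mul_conj ((hf i).differentiableAt (hU.mem_nhds hz.1))
      ((hg i).differentiableAt (hV.mem_nhds hz.2))

/-- For holomorphic functions `fᵢ : U → ℂ` on an open set `U ⊆ ℂᵏ` and holomorphic
functions `gᵢ : V → ℂ` on an open set `V ⊆ ℂˢ`, the map
`η(u, v) = (f₁(u)·conj(g₁(v)), …, f_r(u)·conj(g_r(v)))`, defined on `U × V` regarded as
an open subset of the real inner product space `ℂᵏ × ℂˢ ≅ ℝ^{2(k+s)}`, is a pseudo
harmonic morphism. -/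
theorem holom_times_conj_holom_is_phm {k s r : ℕ} (hr : 1 ≤ r)
    (U : Set (EuclideanSpace ℂ (Fin k))) (V : Set (EuclideanSpace ℂ (Fin s)))
    (hU : IsOpen U) (hV : IsOpen V) (hUne : U.Nonempty) (hVne : V.Nonempty)
    (f : Fin r → EuclideanSpace ℂ (Fin k) → ℂ) (g : Fin r → EuclideanSpace ℂ (Fin s) → ℂ)
    (hf : ∀ i, DifferentiableOn ℂ (f i) U) (hg : ∀ i, DifferentiableOn ℂ (g i) V) :
    PHMOn
      (fun z : WithLp 2 (EuclideanSpace ℂ (Fin k) × EuclideanSpace ℂ (Fin s)) =>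
        fun i : Fin r =>
          f i (WithLp.equiv 2 (EuclideanSpace ℂ (Fin k) × EuclideanSpace ℂ (Fin s)) z).1 *
            (starRingEnd ℂ)
              (g i (WithLp.equiv 2 (EuclideanSpace ℂ (Fin k) × EuclideanSpace ℂ (Fin s)) z).2))
      ((WithLp.equiv 2 (EuclideanSpace ℂ (Fin k) × EuclideanSpace ℂ (Fin s))) ⁻¹' (U ×ˢ V)) :=
  holom_times_conj_holom_is_phm_general hU hV hf hg
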